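/- Let p ∈ (0,1], let J₁, J₂ be index sets, let ω₁ : J₁ → (0,∞), ω₂ : J₂ → (0,∞), ω : J₂ × J₁ → (0,∞), and let C₀ > 0 be such that ω₂(j₂)/ω₁(j₁) ≤ C₀·ω(j₂,j₁) for all (j₂,j₁). Let a : J₂ × J₁ → ℂ satisfy M := (∑_{(j₂,j₁)} (|a(j₂,j₁)|·ω(j₂,j₁))^p)^{1/p} < ∞. Then for every f : J₁ → ℂ with ‖f‖_{ℓ^∞_{ω₁}(J₁)} < ∞, the sums (T_a f)(j₂) = ∑_{j₁} a(j₂,j₁)·f(j₁) converge absolutely for every j₂ ∈ J₂, and ‖T_a f‖_{ℓ^p_{ω₂}(J₂)} ≤ C₀·M·‖f‖_{ℓ^∞_{ω₁}(J₁)}. In particular, the matrix operator T_a is bounded from ℓ^∞_{ω₁}(J₁) to ℓ^p_{ω₂}(J₂) with operator quasinorm at most C₀·M. -/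

import Mathlib

open scoped ENNReal

noncomputable section

/-- Weighted `ℓ^∞` quasinorm `‖f‖ = sup_j |f j| · w j`, valued in `[0,∞]`. -/
def lInfW {J : Type*} (w : J → ℝ) (f : J → ℂ) : ℝ≥0∞ :=
  ⨆ j, ENNReal.ofReal (‖f j‖ * w j)

/-- Weighted `ℓ^s` quasinorm `‖f‖ = (∑_j (|f j| · w j)^s)^(1/s)`, valued in `[0,∞]`. -/
def lpW {J : Type*} (s : ℝ) (w : J → ℝ) (f : J → ℂ) : ℝ≥0∞ :=
  (∑' j, ENNReal.ofReal (‖f j‖ * w j) ^ s) ^ (1 / s)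

/-!
The operator is the map `f ↦ (a (j₂, j₁) * f j₁)` followed by summation over `j₁`.
Since `ω₂ j₂ ≤ C₀ * ω (j₂, j₁) * ω₁ j₁`, the first map is an `ℓ^p · ℓ^∞ ⊆ ℓ^p` product, into
`ℓ^p(J₂ × J₁)` with a weight depending on `j₂` only. For `p ≤ 1` the subadditivity of `t ↦ t ^ p`
gives `ℓ^p ⊆ ℓ^1` contractively, so each row sums absolutely and row summation is a contraction
from `ℓ^p(J₂ × J₁)` to `ℓ^p(J₂)`.
-/

theorem ennreal_rpow_tsum_le_tsum_rpow {ι : Type*} {p : ℝ} (hp : 0 < p) (hp1 : p ≤ 1)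
    (x : ι → ℝ≥0∞) : (∑' i, x i) ^ p ≤ ∑' i, x i ^ p := by
  have sum_le (s : Finset ι) : (∑ i ∈ s, x i) ^ p ≤ ∑ i ∈ s, x i ^ p :=
    s.le_sum_of_subadditive (fun t : ℝ≥0∞ ↦ t ^ p) (ENNReal.zero_rpow_of_pos hp).le
      (fun t u ↦ ENNReal.rpow_add_le_add_rpow t u hp.le hp1) x
  rw [← ENNReal.le_rpow_inv_iff hp, ENNReal.tsum_eq_iSup_sum]
  refine iSup_le fun s ↦ (ENNReal.le_rpow_inv_iff hp).2 ?_
  exact (sum_le s).trans (ENNReal.sum_le_tsum s)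

theorem ofReal_norm_tsum_mul_le {ι E : Type*} [NormedAddCommGroup E] (g : ι → E) (c : ℝ) :
    ENNReal.ofReal (‖∑' i, g i‖ * c) ≤ ∑' i, ENNReal.ofReal (‖g i‖ * c) := by
  simp only [ENNReal.ofReal_mul (norm_nonneg _), ofReal_norm, ENNReal.tsum_mul_right]
  gcongr
  exact enorm_tsum_le_tsum_enorm

theorem summable_norm_of_tsum_ofReal_norm_mul_ne_top {ι E : Type*} [SeminormedAddGroup E]
    {g : ι → E} {c : ℝ} (hc : 0 < c) (h : ∑' i, ENNReal.ofReal (‖g i‖ * c) ≠ ⊤) :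
    Summable fun i ↦ ‖g i‖ := by
  rw [← summable_mul_right_iff hc.ne']
  have nonneg (i : ι) : 0 ≤ ‖g i‖ * c := by positivity
  simpa only [ENNReal.toReal_ofReal (nonneg _)] using ENNReal.summable_toReal h

section WeightedQuasinorm

variable {J K : Type*} {s : ℝ}

theorem ofReal_norm_mul_le_lInfW (w : J → ℝ) (f : J → ℂ) (j : J) :
    ENNReal.ofReal (‖f j‖ * w j) ≤ lInfW w f :=
  le_iSup (fun j ↦ ENNReal.ofReal (‖f j‖ * w j)) j

theorem lInfW_comp_le (w : J → ℝ) (f : J → ℂ) (e : K → J) :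
    lInfW (fun k ↦ w (e k)) (fun k ↦ f (e k)) ≤ lInfW w f :=
  iSup_comp_le (fun j ↦ ENNReal.ofReal (‖f j‖ * w j)) e

theorem lpW_rpow (hs : s ≠ 0) (w : J → ℝ) (f : J → ℂ) :
    lpW s w f ^ s = ∑' j, ENNReal.ofReal (‖f j‖ * w j) ^ s := by
  rw [lpW, one_div, ENNReal.rpow_inv_rpow hs]

theorem lpW_prod_rpow (hs : s ≠ 0) (w : J × K → ℝ) (f : J × K → ℂ) :
    lpW s w f ^ s = ∑' j, lpW s (fun k ↦ w (j, k)) (fun k ↦ f (j, k)) ^ s := by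
  simp only [lpW_rpow hs, ENNReal.tsum_prod']

theorem lpW_row_le (hs : 0 < s) (w : J × K → ℝ) (f : J × K → ℂ) (j : J) :
    lpW s (fun k ↦ w (j, k)) (fun k ↦ f (j, k)) ≤ lpW s w f := by
  rw [← ENNReal.rpow_le_rpow_iff hs, lpW_prod_rpow hs.ne']
  exact ENNReal.le_tsum j

theorem lpW_le_mul_lpW (hs : 0 < s) {v w : J → ℝ} {f g : J → ℂ} {c : ℝ≥0∞}
    (h : ∀ j, ENNReal.ofReal (‖f j‖ * v j) ≤ c * ENNReal.ofReal (‖g j‖ * w j)) :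
    lpW s v f ≤ c * lpW s w g := by
  rw [← ENNReal.rpow_le_rpow_iff hs, ENNReal.mul_rpow_of_nonneg _ _ hs.le, lpW_rpow hs.ne',
    lpW_rpow hs.ne', ← ENNReal.tsum_mul_left]
  gcongr with j
  rw [← ENNReal.mul_rpow_of_nonneg _ _ hs.le]
  gcongr
  exact h j

theorem lpW_mul_le (hs : 0 < s) {u v w : J → ℝ} {C : ℝ} (hC : 0 ≤ C) (hv : ∀ j, 0 ≤ v j)
    (huvw : ∀ j, u j ≤ C * w j * v j) (a f : J → ℂ) :
    lpW s u (fun j ↦ a j * f j) ≤ ENNReal.ofReal C * lpW s w a * lInfW v f := by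
  rw [mul_right_comm]
  refine lpW_le_mul_lpW hs fun j ↦ ?_
  have weighted_norm_le : ‖a j * f j‖ * u j ≤ C * (‖f j‖ * v j) * (‖a j‖ * w j) :=
    calc ‖a j * f j‖ * u j
        ≤ ‖a j * f j‖ * (C * w j * v j) := by gcongr; exact huvw j
      _ = C * (‖f j‖ * v j) * (‖a j‖ * w j) := by rw [norm_mul]; ring
  have hfv : 0 ≤ ‖f j‖ * v j := mul_nonneg (norm_nonneg _) (hv j)
  calc ENNReal.ofReal (‖a j * f j‖ * u j)
      ≤ ENNReal.ofReal (C * (‖f j‖ * v j) * (‖a j‖ * w j)) :=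
        ENNReal.ofReal_le_ofReal weighted_norm_le
    _ = ENNReal.ofReal C * ENNReal.ofReal (‖f j‖ * v j) * ENNReal.ofReal (‖a j‖ * w j) := by
        rw [ENNReal.ofReal_mul (mul_nonneg hC hfv), ENNReal.ofReal_mul hC]
    _ ≤ ENNReal.ofReal C * lInfW v f * ENNReal.ofReal (‖a j‖ * w j) := by
        gcongr
        exact ofReal_norm_mul_le_lInfW v f j

theorem tsum_ofReal_norm_mul_le_lpW (hs : 0 < s) (hs1 : s ≤ 1) (w : J → ℝ) (f : J → ℂ) :
    ∑' j, ENNReal.ofReal (‖f j‖ * w j) ≤ lpW s w f := by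
  rw [← ENNReal.rpow_le_rpow_iff hs, lpW_rpow hs.ne']
  exact ennreal_rpow_tsum_le_tsum_rpow hs hs1 _

theorem summable_norm_row_of_lpW_ne_top (hs : 0 < s) (hs1 : s ≤ 1) {w : J → ℝ} {g : J × K → ℂ}
    (hg : lpW s (fun jk ↦ w jk.1) g ≠ ⊤) {j : J} (hw : 0 < w j) :
    Summable fun k ↦ ‖g (j, k)‖ := by
  refine summable_norm_of_tsum_ofReal_norm_mul_ne_top hw (ne_top_of_le_ne_top hg ?_)
  calc ∑' k, ENNReal.ofReal (‖g (j, k)‖ * w j)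
      ≤ lpW s (fun _ ↦ w j) fun k ↦ g (j, k) := tsum_ofReal_norm_mul_le_lpW hs hs1 _ _
    _ ≤ lpW s (fun jk ↦ w jk.1) g := lpW_row_le hs _ g j

theorem lpW_tsum_row_le (hs : 0 < s) (hs1 : s ≤ 1) (w : J → ℝ) (g : J × K → ℂ) :
    lpW s w (fun j ↦ ∑' k, g (j, k)) ≤ lpW s (fun jk ↦ w jk.1) g := by
  rw [← ENNReal.rpow_le_rpow_iff hs, lpW_rpow hs.ne', lpW_prod_rpow hs.ne']
  gcongr with j
  calc ENNReal.ofReal (‖∑' k, g (j, k)‖ * w j)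
      ≤ ∑' k, ENNReal.ofReal (‖g (j, k)‖ * w j) := ofReal_norm_tsum_mul_le _ _
    _ ≤ lpW s (fun _ ↦ w j) fun k ↦ g (j, k) := tsum_ofReal_norm_mul_le_lpW hs hs1 _ _

end WeightedQuasinorm

/-- a matrix `a` in the weighted class `U^p(ω)` induces a bounded matrix
operator `T_a` from `ℓ^∞_{ω₁}(J₁)` to `ℓ^p_{ω₂}(J₂)`, with absolutely convergent defining
sums and operator quasinorm at most `C₀ · ‖a‖_{U^p(ω)}`. -/
theorem matrix_operator_bounded
    {p : ℝ} (hp : 0 < p) (hp1 : p ≤ 1)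
    {J₁ J₂ : Type*} (ω₁ : J₁ → ℝ) (ω₂ : J₂ → ℝ) (ω : J₂ × J₁ → ℝ)
    (hω₁ : ∀ j, 0 < ω₁ j) (hω₂ : ∀ j, 0 < ω₂ j) (hω : ∀ jk, 0 < ω jk)
    (C₀ : ℝ) (hC₀ : 0 < C₀)
    (hdom : ∀ (j₂ : J₂) (j₁ : J₁), ω₂ j₂ / ω₁ j₁ ≤ C₀ * ω (j₂, j₁))
    (a : J₂ × J₁ → ℂ) (hM : lpW p ω a ≠ ⊤)
    (f : J₁ → ℂ) (hf : lInfW ω₁ f ≠ ⊤) :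
    (∀ j₂ : J₂, Summable fun j₁ => ‖a (j₂, j₁) * f j₁‖) ∧
      lpW p ω₂ (fun j₂ => ∑' j₁, a (j₂, j₁) * f j₁) ≤
        ENNReal.ofReal C₀ * lpW p ω a * lInfW ω₁ f := by
  have hweight (jk : J₂ × J₁) : ω₂ jk.1 ≤ C₀ * ω jk * ω₁ jk.2 :=
    (div_le_iff₀ (hω₁ jk.2)).1 (hdom jk.1 jk.2)
  have hproduct : lpW p (fun jk ↦ ω₂ jk.1) (fun jk ↦ a jk * f jk.2) ≤
      ENNReal.ofReal C₀ * lpW p ω a * lInfW ω₁ f :=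
    (lpW_mul_le hp hC₀.le (fun jk ↦ (hω₁ jk.2).le) hweight a _).trans <| by
      gcongr
      exact lInfW_comp_le ω₁ f Prod.snd
  have hbound : ENNReal.ofReal C₀ * lpW p ω a * lInfW ω₁ f ≠ ⊤ :=
    ENNReal.mul_ne_top (ENNReal.mul_ne_top ENNReal.ofReal_ne_top hM) hf
  constructor
  · intro j₂
    exact summable_norm_row_of_lpW_ne_top hp hp1 (g := fun jk ↦ a jk * f jk.2)
      (ne_top_of_le_ne_top hbound hproduct) (hω₂ j₂)
  · exact (lpW_tsum_row_le hp hp1 ω₂ fun jk ↦ a jk * f jk.2).trans hproduct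

end
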